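/- arXiv:2310.12925 — 3 statements merged into one kernel-verified Lean document; each statement's English description precedes it below -/
import Mathlib

section
/- Let C be a preadditive category with finite limits and finite biproducts. Assume: (i) every kernel pair in C (the pullback of a morphism along itself) admits a coequalizer; (ii) regular epimorphisms in C are stable under pullback (the pullback of a regular epimorphism along any morphism is a regular epimorphism); (iii) every equivalence relation in C is effective. Then C is an abelian category: C has finite colimits, every monomorphism in C is a kernel, and every epimorphism in C is a cokernel. -/
open CategoryTheory Limits

/-- An equivalence relation on `X`: a pair `p₁ p₂ : R ⟶ X` which is jointly monic and admits
reflexivity, symmetry and transitivity morphisms. -/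
structure IsEquivRelation {C : Type*} [Category C] [HasFiniteLimits C]
    {R X : C} (p₁ p₂ : R ⟶ X) : Prop where
  mono : Mono (prod.lift p₁ p₂)
  refl : ∃ r : X ⟶ R, r ≫ p₁ = 𝟙 X ∧ r ≫ p₂ = 𝟙 X
  symm : ∃ s : R ⟶ R, s ≫ p₁ = p₂ ∧ s ≫ p₂ = p₁
  trans : ∃ t : pullback p₂ p₁ ⟶ R,
    t ≫ p₁ = pullback.fst p₂ p₁ ≫ p₁ ∧ t ≫ p₂ = pullback.snd p₂ p₁ ≫ p₂

section Helpers

variable {C : Type*} [Category C] [Preadditive C] [HasFiniteLimits C] [HasBinaryBiproducts C]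

/-- The relation `x ~ x + f a` attached to a monomorphism `f` is an equivalence relation. -/
theorem equivRelation_of_mono {A X : C} (f : A ⟶ X) [Mono f] :
    IsEquivRelation (biprod.snd : A ⊞ X ⟶ X) (biprod.fst ≫ f + biprod.snd) where
  mono := by
    rw [Preadditive.mono_iff_cancel_zero]
    intro T g hg
    have e1 : g ≫ biprod.snd = 0 := by
      have := hg =≫ prod.fst
      rwa [Category.assoc, prod.lift_fst, zero_comp] at this
    have e2 : g ≫ biprod.fst = 0 := by
      have := hg =≫ prod.snd
      simp only [Category.assoc, prod.lift_snd, Preadditive.comp_add, e1, add_zero,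
        zero_comp] at this
      rw [← cancel_mono f]
      simpa using this
    apply biprod.hom_ext <;> simp [e1, e2]
  refl := ⟨biprod.inr, by simp, by simp⟩
  symm := ⟨biprod.lift (-biprod.fst) (biprod.fst ≫ f + biprod.snd), by simp, by simp⟩
  trans := by
    refine ⟨biprod.lift (pullback.fst _ _ ≫ biprod.fst + pullback.snd _ _ ≫ biprod.fst)
      (pullback.fst _ _ ≫ biprod.snd), by simp, ?_⟩
    have := pullback.condition (f := (biprod.fst ≫ f + biprod.snd : A ⊞ X ⟶ X))
      (g := (biprod.snd : A ⊞ X ⟶ X))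
    simp only [Preadditive.comp_add] at this ⊢
    rw [← this]
    simp only [biprod.lift_fst_assoc, biprod.lift_snd, Preadditive.add_comp, Category.assoc]
    abel

/-- A monomorphism whose associated relation is effective is the kernel of its cokernel. -/
theorem mono_cokernel
    (h₃ : ∀ ⦃R X : C⦄ (p₁ p₂ : R ⟶ X), IsEquivRelation p₁ p₂ →
      ∃ (Q : C) (q : X ⟶ Q) (w : p₁ ≫ q = p₂ ≫ q),
        Nonempty (IsColimit (Cofork.ofπ q w)) ∧ IsPullback p₁ p₂ q q)
    {A X : C} (f : A ⟶ X) [Mono f] :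
    ∃ (Q : C) (q : X ⟶ Q) (w : f ≫ q = 0),
      Nonempty (IsColimit (CokernelCofork.ofπ q w)) ∧
      Nonempty (IsLimit (KernelFork.ofι f w)) := by
  obtain ⟨Q, q, w, ⟨hc⟩, hp⟩ := h₃ _ _ (equivRelation_of_mono f)
  have w' : f ≫ q = 0 := by
    have := biprod.inl ≫= w
    simpa using this.symm
  have epi : ∀ {Z : C} (a b : Q ⟶ Z), q ≫ a = q ≫ b → a = b :=
    fun a b h => Cofork.IsColimit.hom_ext hc h
  refine ⟨Q, q, w', ⟨?_⟩, ⟨?_⟩⟩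
  · have key : ∀ {Z : C} (k : X ⟶ Z), f ≫ k = 0 → (biprod.snd : A ⊞ X ⟶ X) ≫ k =
        (biprod.fst ≫ f + biprod.snd) ≫ k := fun k hk => by simp [hk]
    exact CokernelCofork.IsColimit.ofπ q w'
      (fun k hk => Cofork.IsColimit.desc hc k (key k hk))
      (fun k hk => Cofork.IsColimit.π_desc' hc k (key k hk))
      (fun k hk m hm => epi _ _ (hm.trans (Cofork.IsColimit.π_desc' hc k (key k hk)).symm))
  · have key : ∀ {T : C} (k : T ⟶ X), k ≫ q = 0 → (0 : T ⟶ X) ≫ q = k ≫ q :=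
      fun k hk => by simp [hk]
    have fac : ∀ {T : C} (k : T ⟶ X) (hk : k ≫ q = 0),
        (hp.lift 0 k (key k hk) ≫ biprod.fst) ≫ f = k := fun k hk => by
      have e1 := hp.lift_fst 0 k (key k hk)
      have e2 := hp.lift_snd 0 k (key k hk)
      rw [Preadditive.comp_add, e1, add_zero] at e2
      simpa using e2
    exact KernelFork.IsLimit.ofι f w'
      (fun k hk => hp.lift 0 k (key k hk) ≫ biprod.fst)
      (fun k hk => fac k hk)
      (fun k hk m hm => by rw [← cancel_mono f, hm, fac k hk])

/-- The comparison map from the coequalizer of the kernel pair is a monomorphism. -/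
theorem mono_desc
    (h₂ : ∀ ⦃X Y Z : C⦄ (f : X ⟶ Y) (g : Z ⟶ Y), RegularEpi f →
      RegularEpi (pullback.snd f g))
    {X Y : C} (f : X ⟶ Y) [HasCoequalizer (pullback.fst f f) (pullback.snd f f)] :
    Mono (coequalizer.desc f pullback.condition :
      coequalizer (pullback.fst f f) (pullback.snd f f) ⟶ Y) := by
  rw [Preadditive.mono_iff_cancel_zero]
  intro K k hk
  let e := coequalizer.π (pullback.fst f f) (pullback.snd f f)
  have re : RegularEpi e := ⟨_, _, _, coequalizer.condition _ _, coequalizerIsCoequalizer _ _⟩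
  have : Epi (pullback.snd e k) := (h₂ e k re).epi
  have h : pullback.fst e k ≫ f = 0 := by
    have h' : e ≫ coequalizer.desc f pullback.condition = f := coequalizer.π_desc _ _
    have h'' := pullback.fst e k ≫= h'
    rw [← h'', pullback.condition_assoc, hk, comp_zero]
  have h4 : pullback.fst e k ≫ e = 0 := by
    have := pullback.lift (pullback.fst e k) 0 (by simpa using h) ≫=
      coequalizer.condition (pullback.fst f f) (pullback.snd f f)
    rw [pullback.lift_fst_assoc, pullback.lift_snd_assoc, zero_comp] at this
    exact this
  rw [← cancel_epi (pullback.snd e k), ← pullback.condition, h4, comp_zero]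

end Helpers

/-- A preadditive, finitely complete, (Barr-)exact category with finite biproducts is abelian:
it has finite colimits, every monomorphism is normal and every epimorphism is normal. -/
theorem abelian_of_additive_exact
    {C : Type*} [Category C] [Preadditive C] [HasFiniteLimits C] [HasFiniteBiproducts C]
    -- (i) kernel pairs admit coequalizers
    (h₁ : ∀ ⦃X Y : C⦄ (f : X ⟶ Y), HasCoequalizer (pullback.fst f f) (pullback.snd f f))
    -- (ii) regular epimorphisms are stable under pullback
    (h₂ : ∀ ⦃X Y Z : C⦄ (f : X ⟶ Y) (g : Z ⟶ Y), RegularEpi f →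
      RegularEpi (pullback.snd f g))
    -- (iii) every equivalence relation is effective
    (h₃ : ∀ ⦃R X : C⦄ (p₁ p₂ : R ⟶ X), IsEquivRelation p₁ p₂ →
      ∃ (Q : C) (q : X ⟶ Q) (w : p₁ ≫ q = p₂ ≫ q),
        Nonempty (IsColimit (Cofork.ofπ q w)) ∧ IsPullback p₁ p₂ q q) :
    HasFiniteColimits C ∧
      (∀ ⦃X Y : C⦄ (f : X ⟶ Y), Mono f → Nonempty (NormalMono f)) ∧
      (∀ ⦃X Y : C⦄ (f : X ⟶ Y), Epi f → Nonempty (NormalEpi f)) := by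
  have : HasBinaryBiproducts C := hasBinaryBiproducts_of_finite_biproducts C
  have hm : ∀ ⦃X Y : C⦄ (f : X ⟶ Y), Mono f → Nonempty (NormalMono f) := by
    intro X Y f _
    obtain ⟨Q, q, w, -, ⟨hl⟩⟩ := mono_cokernel h₃ f
    exact ⟨⟨Q, q, w, hl⟩⟩
  refine ⟨?_, hm, ?_⟩
  · have : HasCokernels C := ⟨fun {X Y} f => by
      have := h₁ f
      have := mono_desc h₂ f
      obtain ⟨Q, q, w, ⟨hc⟩, -⟩ := mono_cokernel h₃ (coequalizer.desc f pullback.condition :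
        coequalizer (pullback.fst f f) (pullback.snd f f) ⟶ Y)
      have hf : coequalizer.π (pullback.fst f f) (pullback.snd f f) ≫
        coequalizer.desc f pullback.condition = f := coequalizer.π_desc _ _
      have := HasColimit.mk ⟨_, isCokernelEpiComp hc
        (coequalizer.π (pullback.fst f f) (pullback.snd f f)) hf.symm⟩
      exact this⟩
    have : HasCoequalizers C := Preadditive.hasCoequalizers_of_hasCokernels
    exact hasFiniteColimits_of_hasCoequalizers_and_finite_coproducts
  · intro X Y f hf
    have := h₁ f
    have := mono_desc h₂ f
    let e := coequalizer.π (pullback.fst f f) (pullback.snd f f)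
    let m : coequalizer (pullback.fst f f) (pullback.snd f f) ⟶ Y :=
      coequalizer.desc f pullback.condition
    have hem : e ≫ m = f := coequalizer.π_desc _ _
    have : Mono m := this
    have : Epi m := by
      have : Epi (e ≫ m) := by rw [hem]; exact hf
      exact epi_of_epi e m
    obtain ⟨nm⟩ := hm m inferInstance
    have : IsRegularMono m := ⟨⟨nm.regularMono⟩⟩
    have : IsIso m := isIso_of_epi_of_strongMono m
    have key : ∀ {Z : C} (k : X ⟶ Z), kernel.ι f ≫ k = 0 →
        pullback.fst f f ≫ k = pullback.snd f f ≫ k := by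
      intro Z k hk
      have h0 : (pullback.fst f f - pullback.snd f f) ≫ f = 0 := by
        rw [Preadditive.sub_comp, pullback.condition, sub_self]
      have := kernel.lift_ι f _ h0 =≫ k
      rw [Category.assoc, hk, comp_zero, Preadditive.sub_comp] at this
      exact sub_eq_zero.mp this.symm
    have fac : ∀ {Z : C} (k : X ⟶ Z) (hk : kernel.ι f ≫ k = 0),
        f ≫ inv m ≫ coequalizer.desc k (key k hk) = k := by
      intro Z k hk
      have h' : f ≫ inv m = e := (IsIso.comp_inv_eq m).mpr hem.symm
      rw [← Category.assoc, h']
      exact coequalizer.π_desc _ _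
    exact ⟨⟨kernel f, kernel.ι f, kernel.condition f,
      CokernelCofork.IsColimit.ofπ f (kernel.condition f)
        (fun k hk => inv m ≫ coequalizer.desc k (key k hk))
        (fun k hk => fac k hk)
        (fun k hk l hl => by rw [← cancel_epi f, hl, fac k hk])⟩⟩
end

section
/- Let C be an abelian category and let p₁ p₂ : R ⟶ X be an equivalence relation on an object X of C (so (p₁,p₂) : R ⟶ X ⨯ X is a monomorphism admitting reflexivity, symmetry and transitivity morphisms). Let q : X ⟶ Q be the coequalizer of p₁ and p₂. Then (p₁, p₂) is the kernel pair of q, i.e. the square with sides p₁, p₂, q, q is a pullback square. -/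
open CategoryTheory Limits

/-- In an abelian category, every equivalence relation is effective: it is the kernel pair of
its coequalizer. -/
theorem equivRelation_effective_of_abelian
    {C : Type*} [Category C] [Abelian C] {R X : C} (p₁ p₂ : R ⟶ X)
    (h : IsEquivRelation p₁ p₂) :
    IsPullback p₁ p₂ (coequalizer.π p₁ p₂) (coequalizer.π p₁ p₂) := by
  obtain ⟨r, hr₁, hr₂⟩ := h.refl
  have joint : ∀ {T : C} (f g : T ⟶ R), f ≫ p₁ = g ≫ p₁ → f ≫ p₂ = g ≫ p₂ → f = g := by
    intro T f g e₁ e₂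
    have := h.mono
    rw [← cancel_mono (prod.lift p₁ p₂), prod.comp_lift, prod.comp_lift, e₁, e₂]
  -- the restriction of `p₂` to the kernel of `p₁` is a monomorphism
  let m : kernel p₁ ⟶ X := kernel.ι p₁ ≫ p₂
  have hm : Mono m := by
    refine ⟨fun f g e => ?_⟩
    rw [← cancel_mono (kernel.ι p₁)]
    apply joint
    · simp
    · simpa [m] using e
  -- `p₂ - p₁` factors through `m`
  let u : R ⟶ kernel p₁ := kernel.lift p₁ (𝟙 R - p₁ ≫ r) (by simp [hr₁])
  have hu : u ≫ m = p₂ - p₁ := by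
    simp [u, m, hr₂]
  have hc : p₁ ≫ cokernel.π m = p₂ ≫ cokernel.π m := by
    have e : (p₂ - p₁) ≫ cokernel.π m = 0 := by
      rw [← hu, Category.assoc, cokernel.condition, comp_zero]
    rw [Preadditive.sub_comp, sub_eq_zero] at e
    exact e.symm
  have key : ∀ {T : C} (a b : T ⟶ X), a ≫ coequalizer.π p₁ p₂ = b ≫ coequalizer.π p₁ p₂ →
      ∃ l : T ⟶ R, l ≫ p₁ = a ∧ l ≫ p₂ = b := by
    intro T a b e
    have e' : (b - a) ≫ cokernel.π m = 0 := by
      rw [← coequalizer.π_desc (cokernel.π m) hc, ← Category.assoc, Preadditive.sub_comp, e,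
        sub_self, zero_comp]
    let c : T ⟶ kernel p₁ := (Abelian.monoIsKernelOfCokernel _ (cokernelIsCokernel m)).lift
      (KernelFork.ofι (b - a) e')
    have hcm : c ≫ m = b - a :=
      (Abelian.monoIsKernelOfCokernel _ (cokernelIsCokernel m)).fac
        (KernelFork.ofι (b - a) e') WalkingParallelPair.zero
    refine ⟨a ≫ r + c ≫ kernel.ι p₁, by simp [hr₁], ?_⟩
    have : c ≫ kernel.ι p₁ ≫ p₂ = b - a := hcm
    simp [hr₂, this]
  refine ⟨⟨coequalizer.condition p₁ p₂⟩, ⟨PullbackCone.IsLimit.mk _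
    (fun s => (key s.fst s.snd s.condition).choose)
    (fun s => (key s.fst s.snd s.condition).choose_spec.1)
    (fun s => (key s.fst s.snd s.condition).choose_spec.2) ?_⟩⟩
  intro s l e₁ e₂
  exact joint _ _ (e₁.trans (key s.fst s.snd s.condition).choose_spec.1.symm)
    (e₂.trans (key s.fst s.snd s.condition).choose_spec.2.symm)
end

section
/- Let C be a small category with finite limits. Then C is an abelian category if and only if the category Ind C of ind-objects of C is an abelian category. -/
open CategoryTheory Limits

/-- If `Ind C` is preadditive with cokernels, and `C` has finite limits (and the induced preadditive
structure), then `C` has cokernels. -/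
theorem hasCokernels_of_ind (C : Type u) [SmallCategory C] [HasFiniteLimits C]
    [Preadditive C] [Preadditive (Ind C)] [HasCokernels (Ind C)]
    [(Ind.yoneda (C := C)).Additive] : HasCokernels C := by
  refine ⟨fun {X Y} f => ?_⟩
  let y : C ⥤ Ind C := Ind.yoneda
  have : y.Additive := inferInstanceAs (Ind.yoneda (C := C)).Additive
  have : y.Full := inferInstanceAs (Ind.yoneda (C := C)).Full
  have : y.Faithful := inferInstanceAs (Ind.yoneda (C := C)).Faithful
  let Z := cokernel (y.map f)
  let π : y.obj Y ⟶ Z := cokernel.π (y.map f)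
  have hfilt : IsFiltered (CostructuredArrow y Z) :=
    RepresentablyCoflat.filtered (F := Ind.yoneda (C := C)) Z
  let A : CostructuredArrow y Z := CostructuredArrow.mk (0 : y.obj X ⟶ Z)
  let B : CostructuredArrow y Z := CostructuredArrow.mk π
  let a : A ⟶ B := CostructuredArrow.homMk f (by simp [A, B, π])
  let b : A ⟶ B := CostructuredArrow.homMk 0 (by simp [A, B])
  let D := IsFiltered.coeq a b
  let W : C := D.left
  let w : y.obj W ⟶ Z := D.hom
  let g : Y ⟶ W := (IsFiltered.coeqHom a b).left
  have hg : y.map g ≫ w = π := CostructuredArrow.w (IsFiltered.coeqHom a b)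
  have hfg : f ≫ g = 0 := by
    have h := congrArg CommaMorphism.left (IsFiltered.coeq_condition a b)
    have h2 : f ≫ g = (0 : X ⟶ Y) ≫ g := h
    rw [h2, zero_comp]
  let s : Z ⟶ y.obj W := cokernel.desc (y.map f) (y.map g)
    (by rw [← y.map_comp, hfg, y.map_zero])
  have hs : π ≫ s = y.map g := cokernel.π_desc _ _ _
  have hsw : s ≫ w = 𝟙 Z := by
    rw [← cancel_epi (cokernel.π (y.map f))]
    change π ≫ s ≫ w = π ≫ 𝟙 Z
    rw [reassoc_of% hs, hg, Category.comp_id]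
  have : IsIdempotentComplete C :=
    (Idempotents.isIdempotentComplete_iff_hasEqualizer_of_id_and_idempotent C).2
      (fun _ _ _ => inferInstance)
  obtain ⟨V, i, e, hie, hei⟩ := IsIdempotentComplete.idempotents_split W (y.preimage (w ≫ s))
    (y.map_injective (by simp [reassoc_of% hsw]))
  have hei' : y.map e ≫ y.map i = w ≫ s := by rw [← y.map_comp, hei, y.map_preimage]
  have hie' : y.map i ≫ y.map e = 𝟙 _ := by rw [← y.map_comp, hie, y.map_id]
  have hepi : Epi (g ≫ e) := by
    apply y.epi_of_epi_map
    rw [y.map_comp, ← hs, Category.assoc]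
    have : IsSplitEpi (s ≫ y.map e) := ⟨⟨⟨y.map i ≫ w, by
      rw [Category.assoc, ← reassoc_of% hei', hie', Category.comp_id, hie']⟩⟩⟩
    exact epi_comp (cokernel.π (y.map f)) (s ≫ y.map e)
  refine ⟨⟨⟨_, CokernelCofork.IsColimit.ofπ' (f := f) (g ≫ e) (by rw [reassoc_of% hfg, zero_comp])
    (fun {T} k hk => ?_)⟩⟩⟩
  have hk' : y.map f ≫ y.map k = 0 := by rw [← y.map_comp, hk, y.map_zero]
  refine ⟨y.preimage (y.map i ≫ w ≫ cokernel.desc (y.map f) (y.map k) hk'), y.map_injective ?_⟩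
  rw [y.map_comp, y.map_comp, y.map_preimage, Category.assoc, reassoc_of% hei', reassoc_of% hsw,
    reassoc_of% hg]
  exact cokernel.π_desc _ _ _

/-- A small, finitely complete category is abelian if and only if its category of
ind-objects is abelian. -/
theorem abelian_iff_ind_abelian (C : Type u) [SmallCategory C] [HasFiniteLimits C] :
    Nonempty (Abelian C) ↔ Nonempty (Abelian (Ind C)) := by
  constructor
  · rintro ⟨_⟩
    exact ⟨inferInstance⟩
  · rintro ⟨_⟩
    letI : Preadditive C := .ofFullyFaithful (Ind.yoneda.fullyFaithful (C := C))
    have : (Ind.yoneda (C := C)).Additive :=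
      (Ind.yoneda.fullyFaithful (C := C)).additive_ofFullyFaithful
    have := hasCokernels_of_ind C
    have : ∀ {X Y : C} (f : X ⟶ Y), IsIso (Abelian.coimageImageComparison f) := by
      intro X Y f
      have : IsIso ((Ind.yoneda (C := C)).map (Abelian.coimageImageComparison f)) := by
        rw [Arrow.isIso_iff_isIso_of_isIso
          (Abelian.PreservesCoimageImageComparison.iso (Ind.yoneda (C := C)) f).hom]
        infer_instance
      exact isIso_of_fully_faithful (Ind.yoneda (C := C)) _
    exact ⟨Abelian.ofCoimageImageComparisonIsIso⟩
end
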